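/- Let F : ℝ^M × ℝ^M → ℝ be continuous, convex in the second variable, and coercive (for every compact K ⊆ ℝ^M, min_{y ∈ K} F(y,q) → +∞ as |q| → +∞), and assume its critical value c = inf { b ∈ ℝ : F(y,Du) = b admits a viscosity subsolution on ℝ^M } is finite. Let b ≥ c and let h : ℝ^M → ℝ be continuous with h ≥ 1 on ℝ^M and such that h(y) > 1 implies F(y,0) ≤ b. Then for every z0 ∈ ℝ^M the function y ↦ S_b^h(z0,y) is locally Lipschitz-continuous on ℝ^M and is a viscosity supersolution of F(y,Du) = b on ℝ^M ∖ {z0}. -/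

import Mathlib

open Set MeasureTheory Metric Filter
open scoped RealInnerProductSpace Topology

noncomputable section

/-- `ℝ^n` with the Euclidean structure. -/
abbrev Euc (n : ℕ) : Type := EuclideanSpace ℝ (Fin n)

/-- A control: a measurable map with values in the control set `A`. -/
def IsControl {k : ℕ} (A : Set (Euc k)) (α : ℝ → Euc k) : Prop :=
  Measurable α ∧ ∀ t, α t ∈ A

/-- `(ξ, η)` is a trajectory of the controlled dynamics `(CD_ε)` for the control `α`:
this is the integral form, equivalent to `(ξ, η)` being locally absolutely continuous
with `ξ' = ε f(ξ, η, α)` and `η' = g(ξ, η, α)` a.e. on `[0, ∞)`. -/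
def IsTrajectory {N M k : ℕ}
    (f : Euc N → Euc M → Euc k → Euc N) (g : Euc N → Euc M → Euc k → Euc M)
    (ε : ℝ) (α : ℝ → Euc k) (ξ : ℝ → Euc N) (η : ℝ → Euc M) : Prop :=
  (∀ t, 0 ≤ t → IntervalIntegrable (fun s => f (ξ s) (η s) (α s)) volume 0 t) ∧
  (∀ t, 0 ≤ t → IntervalIntegrable (fun s => g (ξ s) (η s) (α s)) volume 0 t) ∧
  (∀ t, 0 ≤ t → ξ t = ξ 0 + ε • ∫ s in (0:ℝ)..t, f (ξ s) (η s) (α s)) ∧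
  (∀ t, 0 ≤ t → η t = η 0 + ∫ s in (0:ℝ)..t, g (ξ s) (η s) (α s))

/-- The value function `V^ε(x, y, t)` of the singularly perturbed optimal control problem. -/
def valueFun {N M k : ℕ} (A : Set (Euc k))
    (f : Euc N → Euc M → Euc k → Euc N) (g : Euc N → Euc M → Euc k → Euc M)
    (ℓ : Euc N → Euc M → Euc k → ℝ) (u0 : Euc N → Euc M → ℝ)
    (ε : ℝ) (x : Euc N) (y : Euc M) (t : ℝ) : ℝ :=
  sInf { v : ℝ | ∃ (α : ℝ → Euc k) (ξ : ℝ → Euc N) (η : ℝ → Euc M),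
    IsControl A α ∧ IsTrajectory f g ε α ξ η ∧ ξ 0 = x ∧ η 0 = y ∧
    IntervalIntegrable (fun s => ℓ (ξ s) (η s) (α s)) volume 0 (t / ε) ∧
    v = ε * (∫ s in (0:ℝ)..(t / ε), ℓ (ξ s) (η s) (α s)) + u0 (ξ (t / ε)) (η (t / ε)) }

/-- The Hamiltonian `H(x,y,p,q) = max_{a ∈ A} { -p·f(x,y,a) - q·g(x,y,a) - ℓ(x,y,a) }`. -/
def Ham {N M k : ℕ} (A : Set (Euc k))
    (f : Euc N → Euc M → Euc k → Euc N) (g : Euc N → Euc M → Euc k → Euc M)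
    (ℓ : Euc N → Euc M → Euc k → ℝ)
    (x : Euc N) (y : Euc M) (p : Euc N) (q : Euc M) : ℝ :=
  sSup ((fun a => -⟪p, f x y a⟫ - ⟪q, g x y a⟫ - ℓ x y a) '' A)

/-- Viscosity subsolution of the stationary equation `G(y, Du) = b` on `Ω`. -/
def IsVSubOn {m : ℕ} (G : Euc m → Euc m → ℝ) (b : ℝ) (Ω : Set (Euc m)) (u : Euc m → ℝ) : Prop :=
  UpperSemicontinuousOn u Ω ∧
  ∀ ψ : Euc m → ℝ, ContDiff ℝ 1 ψ → ∀ y ∈ Ω,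
    IsLocalMaxOn (fun z => u z - ψ z) Ω y → G y (gradient ψ y) ≤ b

/-- Viscosity supersolution of the stationary equation `G(y, Du) = b` on `Ω`. -/
def IsVSupOn {m : ℕ} (G : Euc m → Euc m → ℝ) (b : ℝ) (Ω : Set (Euc m)) (u : Euc m → ℝ) : Prop :=
  LowerSemicontinuousOn u Ω ∧
  ∀ ψ : Euc m → ℝ, ContDiff ℝ 1 ψ → ∀ y ∈ Ω,
    IsLocalMinOn (fun z => u z - ψ z) Ω y → b ≤ G y (gradient ψ y)

/-- The set of levels `b` for which `F(y, Du) = b` has a viscosity subsolution on `ℝ^m`. -/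
def subsolLevels {m : ℕ} (F : Euc m → Euc m → ℝ) : Set ℝ :=
  { b : ℝ | ∃ u : Euc m → ℝ, IsVSubOn F b univ u }

/-- The critical value of a Hamiltonian `F` on `ℝ^m`. -/
def critVal {m : ℕ} (F : Euc m → Euc m → ℝ) : ℝ :=
  sInf (subsolLevels F)

/-- The effective Hamiltonian `H̄(x, p)`. -/
def effH {N M k : ℕ} (A : Set (Euc k))
    (f : Euc N → Euc M → Euc k → Euc N) (g : Euc N → Euc M → Euc k → Euc M)
    (ℓ : Euc N → Euc M → Euc k → ℝ) (x : Euc N) (p : Euc N) : ℝ :=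
  critVal (fun (y q : Euc M) => Ham A f g ℓ x y p q)

/-- The frozen Hamiltonian `H₀(y, q) = H(x₀, y, p₀, q)` of the cell problem. -/
def cellH {N M k : ℕ} (A : Set (Euc k))
    (f : Euc N → Euc M → Euc k → Euc N) (g : Euc N → Euc M → Euc k → Euc M)
    (ℓ : Euc N → Euc M → Euc k → ℝ) (x0 p0 : Euc N) : Euc M → Euc M → ℝ :=
  fun y q => Ham A f g ℓ x0 y p0 q

/-- Viscosity subsolution of `u_t + G(x, D_x u) = 0` on `Ω ⊆ ℝ^n × ℝ`. -/
def IsParabSubOn {n : ℕ} (G : Euc n → Euc n → ℝ) (Ω : Set (Euc n × ℝ)) (u : Euc n × ℝ → ℝ) : Prop :=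
  UpperSemicontinuousOn u Ω ∧
  ∀ ψ : Euc n × ℝ → ℝ, ContDiff ℝ 1 ψ → ∀ z ∈ Ω,
    IsLocalMaxOn (fun w => u w - ψ w) Ω z →
    deriv (fun s => ψ (z.1, s)) z.2 + G z.1 (gradient (fun x => ψ (x, z.2)) z.1) ≤ 0

/-- Viscosity supersolution of `u_t + G(x, D_x u) = 0` on `Ω ⊆ ℝ^n × ℝ`. -/
def IsParabSupOn {n : ℕ} (G : Euc n → Euc n → ℝ) (Ω : Set (Euc n × ℝ)) (u : Euc n × ℝ → ℝ) : Prop :=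
  LowerSemicontinuousOn u Ω ∧
  ∀ ψ : Euc n × ℝ → ℝ, ContDiff ℝ 1 ψ → ∀ z ∈ Ω,
    IsLocalMinOn (fun w => u w - ψ w) Ω z →
    0 ≤ deriv (fun s => ψ (z.1, s)) z.2 + G z.1 (gradient (fun x => ψ (x, z.2)) z.1)

/-- Viscosity subsolution of `u_t + H(x, y, D_x u, D_y u / ε) = 0` on `Ω ⊆ (ℝ^N × ℝ^M) × ℝ`. -/
def IsHJSubOn {N M : ℕ} (Hm : Euc N → Euc M → Euc N → Euc M → ℝ) (ε : ℝ)
    (Ω : Set ((Euc N × Euc M) × ℝ)) (u : (Euc N × Euc M) × ℝ → ℝ) : Prop :=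
  UpperSemicontinuousOn u Ω ∧
  ∀ ψ : (Euc N × Euc M) × ℝ → ℝ, ContDiff ℝ 1 ψ → ∀ z ∈ Ω,
    IsLocalMaxOn (fun w => u w - ψ w) Ω z →
    deriv (fun s => ψ (z.1, s)) z.2 +
      Hm z.1.1 z.1.2 (gradient (fun x => ψ ((x, z.1.2), z.2)) z.1.1)
        (ε⁻¹ • gradient (fun y => ψ ((z.1.1, y), z.2)) z.1.2) ≤ 0

/-- Viscosity supersolution of `u_t + H(x, y, D_x u, D_y u / ε) = 0` on `Ω`. -/
def IsHJSupOn {N M : ℕ} (Hm : Euc N → Euc M → Euc N → Euc M → ℝ) (ε : ℝ)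
    (Ω : Set ((Euc N × Euc M) × ℝ)) (u : (Euc N × Euc M) × ℝ → ℝ) : Prop :=
  LowerSemicontinuousOn u Ω ∧
  ∀ ψ : (Euc N × Euc M) × ℝ → ℝ, ContDiff ℝ 1 ψ → ∀ z ∈ Ω,
    IsLocalMinOn (fun w => u w - ψ w) Ω z →
    0 ≤ deriv (fun s => ψ (z.1, s)) z.2 +
      Hm z.1.1 z.1.2 (gradient (fun x => ψ ((x, z.1.2), z.2)) z.1.1)
        (ε⁻¹ • gradient (fun y => ψ ((z.1.1, y), z.2)) z.1.2)

/-- The upper weak semilimit `(limsup^# V^ε)(z)`. -/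
def upperLim {Z : Type*} [TopologicalSpace Z] (V : ℝ → Z → ℝ) (z : Z) : ℝ :=
  sSup { l : ℝ | ∃ (e : ℕ → ℝ) (w : ℕ → Z), (∀ n, 0 < e n) ∧
    Tendsto e atTop (𝓝 0) ∧ Tendsto w atTop (𝓝 z) ∧
    l = Filter.limsup (fun n => V (e n) (w n)) atTop }

/-- The lower weak semilimit `(liminf_# V^ε)(z)`. -/
def lowerLim {Z : Type*} [TopologicalSpace Z] (V : ℝ → Z → ℝ) (z : Z) : ℝ :=
  sInf { l : ℝ | ∃ (e : ℕ → ℝ) (w : ℕ → Z), (∀ n, 0 < e n) ∧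
    Tendsto e atTop (𝓝 0) ∧ Tendsto w atTop (𝓝 z) ∧
    l = Filter.liminf (fun n => V (e n) (w n)) atTop }

/-- The lower semicontinuous envelope `φ_#`. -/
def lscEnvelope {X : Type*} [TopologicalSpace X] (φ : X → ℝ) (x : X) : ℝ :=
  Filter.liminf φ (𝓝 x)

/-- Local equiboundedness of the family of value functions. -/
def LocEquibounded {N M : ℕ} (V : ℝ → Euc N → Euc M → ℝ → ℝ) : Prop :=
  ∀ C : Set (Euc N × Euc M × ℝ), Bornology.IsBounded C →
    ∃ Mb : ℝ, ∀ ε : ℝ, 0 < ε → ∀ z ∈ C, 0 ≤ z.2.2 → |V ε z.1 z.2.1 z.2.2| ≤ Mb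

/-- The sublevel set `Z_b(y)` of a Hamiltonian. -/
def sublevel {m : ℕ} (G : Euc m → Euc m → ℝ) (b : ℝ) (y : Euc m) : Set (Euc m) :=
  { q | G y q ≤ b }

/-- The support function `σ_b(y, v)` of the sublevel `Z_b(y)`. -/
def suppFn {m : ℕ} (G : Euc m → Euc m → ℝ) (b : ℝ) (y v : Euc m) : ℝ :=
  sSup ((fun q => ⟪q, v⟫) '' sublevel G b y)

/-- The intrinsic length of a curve (Lipschitz curves are differentiable a.e.). -/
def intrinsicLen {m : ℕ} (G : Euc m → Euc m → ℝ) (b : ℝ) (ξ : ℝ → Euc m) : ℝ :=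
  ∫ s in (0:ℝ)..1, suppFn G b (ξ s) (deriv ξ s)

/-- Admissible (Lipschitz) curves on `[0,1]` joining `y₁` to `y₂`. -/
def IsAdmCurve {m : ℕ} (ξ : ℝ → Euc m) (y₁ y₂ : Euc m) : Prop :=
  (∃ Kl : NNReal, LipschitzWith Kl ξ) ∧ ξ 0 = y₁ ∧ ξ 1 = y₂

/-- The intrinsic distance `S_b(y₁, y₂)`. -/
def intrinsicDist {m : ℕ} (G : Euc m → Euc m → ℝ) (b : ℝ) (y₁ y₂ : Euc m) : ℝ :=
  sInf { L : ℝ | ∃ ξ : ℝ → Euc m, IsAdmCurve ξ y₁ y₂ ∧ L = intrinsicLen G b ξ }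

/-- The weighted intrinsic length associated with a weight `h`. -/
def wIntrinsicLen {m : ℕ} (G : Euc m → Euc m → ℝ) (b : ℝ) (h : Euc m → ℝ) (ξ : ℝ → Euc m) : ℝ :=
  ∫ s in (0:ℝ)..1, h (ξ s) * suppFn G b (ξ s) (deriv ξ s)

/-- The weighted intrinsic distance `S_b^h(y₁, y₂)`. -/
def wIntrinsicDist {m : ℕ} (G : Euc m → Euc m → ℝ) (b : ℝ) (h : Euc m → ℝ) (y₁ y₂ : Euc m) : ℝ :=
  sInf { L : ℝ | ∃ ξ : ℝ → Euc m, IsAdmCurve ξ y₁ y₂ ∧ L = wIntrinsicLen G b h ξ }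

/-- The intrinsic critical distance `S(y₁, y₂)` of the cell problem at `(x₀, p₀)`. -/
def cellS {N M k : ℕ} (A : Set (Euc k))
    (f : Euc N → Euc M → Euc k → Euc N) (g : Euc N → Euc M → Euc k → Euc M)
    (ℓ : Euc N → Euc M → Euc k → ℝ) (x0 p0 : Euc N) (y₁ y₂ : Euc M) : ℝ :=
  intrinsicDist (cellH A f g ℓ x0 p0) (effH A f g ℓ x0 p0) y₁ y₂

/-- The Aubry set of `G` at the level `c`: points near which no global viscosity
subsolution of `G(y, Du) = c` is strict. -/
def AubrySet {m : ℕ} (G : Euc m → Euc m → ℝ) (c : ℝ) : Set (Euc m) :=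
  { y₀ | ¬ ∃ (u : Euc m → ℝ) (δ : ℝ) (U : Set (Euc m)),
      IsVSubOn G c univ u ∧ 0 < δ ∧ IsOpen U ∧ y₀ ∈ U ∧ IsVSubOn G (c - δ) U u }

end

/-!
Let `σ` be the support function of the sublevels of `F`, and `S` the weighted distance.

*Finiteness.* By coercivity a viscosity subsolution `u` of `F(y, Du) = b'` is locally Lipschitz, so
by Rademacher's theorem it satisfies `F(y, Du) ≤ b'` almost everywhere. Integrating along almost
every translate of a curve, `u` increases along a curve by at most its intrinsic length. Closed
curves therefore have nonnegative length at every level `b' > c`, and, letting `b'` decrease, at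
every level `b ≥ c`. This bounds the lengths of the curves joining two given points from below. The
weight only makes lengths larger, because `0 ≤ σ` wherever `h > 1`.

*Lipschitz continuity.* The triangle inequality, together with the length of segments.

*Supersolution.* Suppose `S(z₀, ·) - ψ` has a local minimum at `y ≠ z₀` where `F(y, Dψ) < b`. Then
`F(z, Dψ(z) + e) ≤ b` for `z` near `y` and all small `e`. A curve from `z₀` to `y` enters a ball of
radius `r` around `y` for the last time at some point `z`, and on the remaining arc the function
`w ↦ ψ(w) + ⟪e, w⟫`, with `e` of norm `ε` directed along `y - z`, increases by at most the length
of the arc. Hence the curve has length at least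
`S(z₀, z) + ψ(y) - ψ(z) + ε r ≥ S(z₀, y) + ε r`, which is absurd for curves of nearly minimal
length.
-/

section Coercive

variable {X Y E : Type*} [TopologicalSpace Y] [NormedAddCommGroup E] {F : Y → E → ℝ}

/-- Coercivity of `F y q` in `q`, uniformly for `y` in each compact set. -/
def IsLocallyCoercive (F : Y → E → ℝ) : Prop :=
  ∀ K : Set Y, IsCompact K → ∀ c : ℝ, ∃ R : ℝ, ∀ q : E, R < ‖q‖ → ∀ y ∈ K, c < F y q

theorem IsLocallyCoercive.exists_norm_le (hF : IsLocallyCoercive F) {K : Set Y}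
    (hK : IsCompact K) (c : ℝ) : ∃ R : ℝ, 0 ≤ R ∧ ∀ y ∈ K, ∀ q, F y q ≤ c → ‖q‖ ≤ R := by
  obtain ⟨R, hR⟩ := hF K hK c
  refine ⟨max R 0, le_max_right .., fun y hy q hq => ?_⟩
  by_contra! hlt
  exact (hR q ((le_max_left ..).trans_lt hlt) y hy).not_ge hq

/-- Upper hemicontinuity of the sublevels of a coercive function. -/
theorem IsLocallyCoercive.eventually_forall_of_le [TopologicalSpace X]
    [WeaklyLocallyCompactSpace Y] [ProperSpace E] (hF : IsLocallyCoercive F)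
    (hFc : Continuous (Function.uncurry F)) {y : X → Y} {β : X → ℝ} {x₀ : X}
    (hy : ContinuousAt y x₀) (hβ : ContinuousAt β x₀) {P : X → E → Prop}
    (hP : ∀ q, F (y x₀) q ≤ β x₀ → ∀ᶠ z in 𝓝 (x₀, q), P z.1 z.2) :
    ∀ᶠ x in 𝓝 x₀, ∀ q, F (y x) q ≤ β x → P x q := by
  obtain ⟨K, hK, hKy⟩ := exists_compact_mem_nhds (y x₀)
  obtain ⟨R, -, hR⟩ := hF.exists_norm_le hK (β x₀ + 1)
  have on_ball : ∀ᶠ x in 𝓝 x₀, ∀ q ∈ closedBall (0 : E) R, F (y x) q ≤ β x → P x q := by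
    refine (isCompact_closedBall 0 R).eventually_forall_of_forall_eventually fun q _ => ?_
    by_cases hq : F (y x₀) q ≤ β x₀
    · exact (hP q hq).mono fun z hz _ => hz
    · have hFy : ContinuousAt (fun z : X × E => F (y z.1) z.2) (x₀, q) :=
        hFc.continuousAt.comp (f := fun z : X × E => (y z.1, z.2))
          ((hy.comp continuousAt_fst).prodMk continuousAt_snd)
      have hβ' : ContinuousAt (fun z : X × E => β z.1) (x₀, q) :=
        ContinuousAt.comp (g := β) hβ continuousAt_fst
      filter_upwards [hβ'.eventually_lt hFy (not_le.1 hq)] with z hz hle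
      exact absurd hle hz.not_ge
  filter_upwards [on_ball, hy.eventually_mem hKy, hβ.eventually_lt_const (lt_add_one (β x₀))]
    with x hx hxK hxβ q hq
  exact hx q (mem_closedBall_zero_iff.2 (hR _ hxK q (hq.trans hxβ.le))) hq

end Coercive

section SupportFunction

variable {m : ℕ} {F : Euc m → Euc m → ℝ} {b b' : ℝ} {y y' v : Euc m}

theorem inner_le_suppFn (hF : IsLocallyCoercive F) {q : Euc m} (hq : q ∈ sublevel F b y)
    (v : Euc m) : ⟪q, v⟫ ≤ suppFn F b y v := by
  obtain ⟨R, -, hR⟩ := hF.exists_norm_le isCompact_singleton b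
  refine le_csSup ⟨R * ‖v‖, ?_⟩ (mem_image_of_mem _ hq)
  rintro _ ⟨p, hp, rfl⟩
  exact (real_inner_le_norm p v).trans (by gcongr; exact hR y rfl p hp)

theorem suppFn_le (hne : (sublevel F b y).Nonempty) {a : ℝ}
    (h : ∀ q ∈ sublevel F b y, ⟪q, v⟫ ≤ a) : suppFn F b y v ≤ a :=
  csSup_le (hne.image _) (forall_mem_image.2 h)

theorem suppFn_mono_of_subset (hF : IsLocallyCoercive F) (hne : (sublevel F b y).Nonempty)
    (hsub : sublevel F b y ⊆ sublevel F b' y') (v : Euc m) :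
    suppFn F b y v ≤ suppFn F b' y' v :=
  suppFn_le hne fun _ hq => inner_le_suppFn hF (hsub hq) v

theorem sublevel_subset_sublevel (hbb' : b ≤ b') : sublevel F b y ⊆ sublevel F b' y :=
  fun _ hq => le_trans hq hbb'

theorem suppFn_smul {t : ℝ} (ht : 0 ≤ t) (y v : Euc m) :
    suppFn F b y (t • v) = t * suppFn F b y v := by
  simp only [suppFn, ← smul_eq_mul, ← Real.sSup_smul_of_nonneg ht, ← image_smul, image_image,
    inner_smul_right]

theorem abs_suppFn_le {R : ℝ} (hne : (sublevel F b y).Nonempty)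
    (hR : ∀ q ∈ sublevel F b y, ‖q‖ ≤ R) (v : Euc m) : |suppFn F b y v| ≤ R * ‖v‖ := by
  have hinner : ∀ q ∈ sublevel F b y, |⟪q, v⟫| ≤ R * ‖v‖ := fun q hq =>
    (abs_real_inner_le_norm q v).trans (by gcongr; exact hR q hq)
  obtain ⟨q, hq⟩ := hne
  refine abs_le.2 ⟨(abs_le.1 (hinner q hq)).1.trans (le_csSup ⟨R * ‖v‖, ?_⟩ ⟨q, hq, rfl⟩),
    suppFn_le ⟨q, hq⟩ fun p hp => (abs_le.1 (hinner p hp)).2⟩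
  exact forall_mem_image.2 fun p hp => (abs_le.1 (hinner p hp)).2

theorem suppFn_le_mul_suppFn (hF : IsLocallyCoercive F) {c : ℝ} (hc : 1 ≤ c)
    (hc0 : 1 < c → F y 0 ≤ b) (v : Euc m) : suppFn F b y v ≤ c * suppFn F b y v := by
  rcases hc.eq_or_lt with rfl | hlt
  · rw [one_mul]
  · have hσ : 0 ≤ suppFn F b y v := inner_zero_left (𝕜 := ℝ) v ▸ inner_le_suppFn hF (hc0 hlt) v
    exact le_mul_of_one_le_left hσ hc

theorem eventually_suppFn_lt {X : Type*} [TopologicalSpace X] (hF : IsLocallyCoercive F)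
    (hFc : Continuous (Function.uncurry F)) {β : X → ℝ} {y v : X → Euc m} {x₀ : X}
    (hβ : ContinuousAt β x₀) (hy : ContinuousAt y x₀) (hv : ContinuousAt v x₀) {a : ℝ}
    (ha : suppFn F (β x₀) (y x₀) (v x₀) < a) :
    ∀ᶠ x in 𝓝 x₀, (sublevel F (β x) (y x)).Nonempty → suppFn F (β x) (y x) (v x) < a := by
  obtain ⟨a', ha', haa'⟩ := exists_between ha
  have inner_lt : ∀ᶠ x in 𝓝 x₀, ∀ q, F (y x) q ≤ β x → ⟪q, v x⟫ < a' := by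
    refine hF.eventually_forall_of_le hFc hy hβ fun q hq => ?_
    have hinner : ContinuousAt (fun z : X × Euc m => ⟪z.2, v z.1⟫) (x₀, q) :=
      ContinuousAt.inner continuousAt_snd
        (ContinuousAt.comp (g := v) hv continuousAt_fst)
    exact hinner.eventually_lt_const ((inner_le_suppFn hF hq _).trans_lt ha')
  filter_upwards [inner_lt] with x hx hne
  exact (suppFn_le hne fun q hq => (hx q hq).le).trans_lt haa'

theorem upperSemicontinuous_suppFn (hF : IsLocallyCoercive F)
    (hFc : Continuous (Function.uncurry F)) (hne : ∀ y, (sublevel F b y).Nonempty) :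
    UpperSemicontinuous fun z : Euc m × Euc m => suppFn F b z.1 z.2 := fun _ _ ha =>
  (eventually_suppFn_lt hF hFc continuousAt_const continuousAt_fst continuousAt_snd ha).mono
    fun z hz => hz (hne z.1)

theorem tendsto_suppFn_nhdsGT (hF : IsLocallyCoercive F)
    (hFc : Continuous (Function.uncurry F)) (hne : (sublevel F b y).Nonempty) (v : Euc m) :
    Tendsto (fun b' => suppFn F b' y v) (𝓝[>] b) (𝓝 (suppFn F b y v)) := by
  have hsub : ∀ᶠ b' in 𝓝[>] b, sublevel F b y ⊆ sublevel F b' y :=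
    eventually_mem_nhdsWithin.mono fun b' hb' => sublevel_subset_sublevel (mem_Ioi.1 hb').le
  refine tendsto_order.2 ⟨fun a ha => ?_, fun a ha => ?_⟩
  · exact hsub.mono fun b' hb' => ha.trans_le (suppFn_mono_of_subset hF hne hb' v)
  · have hlt := eventually_suppFn_lt hF hFc (β := id) (x₀ := b) continuousAt_id
      continuousAt_const continuousAt_const ha
    filter_upwards [hsub, nhdsWithin_le_nhds hlt] with b' hb' hb'lt
    exact hb'lt (hne.mono hb')

theorem isClosed_setOf_sublevel_nonempty (hF : IsLocallyCoercive F)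
    (hFc : Continuous (Function.uncurry F)) :
    IsClosed {z : ℝ × Euc m | (sublevel F z.1 z.2).Nonempty} := by
  rw [← isOpen_compl_iff, isOpen_iff_mem_nhds]
  intro z hz
  have hempty : ∀ᶠ x in 𝓝 z, ∀ q, F x.2 q ≤ x.1 → False :=
    hF.eventually_forall_of_le hFc continuousAt_snd continuousAt_fst fun q hq =>
      (hz ⟨q, hq⟩).elim
  exact hempty.mono fun x hx ⟨q, hq⟩ => hx q hq

end SupportFunction

/-- The integrand of the weighted intrinsic length of a curve. -/
noncomputable def lengthDensity {m : ℕ} (G : Euc m → Euc m → ℝ) (b : ℝ) (h : Euc m → ℝ)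
    (ξ : ℝ → Euc m) (s : ℝ) : ℝ :=
  h (ξ s) * suppFn G b (ξ s) (deriv ξ s)

section Length

variable {m : ℕ} {F : Euc m → Euc m → ℝ} {b : ℝ} {h : Euc m → ℝ} {ξ : ℝ → Euc m} {C : NNReal}

theorem lengthDensity_one (b : ℝ) (ξ : ℝ → Euc m) :
    lengthDensity F b (fun _ => 1) ξ = fun s => suppFn F b (ξ s) (deriv ξ s) := by
  funext s
  rw [lengthDensity, one_mul]

theorem exists_abs_lengthDensity_le (hF : IsLocallyCoercive F) (hh : Continuous h)
    (hξ : LipschitzWith C ξ) (b a a' : ℝ) :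
    ∃ B : ℝ, ∀ b' ≤ b, ∀ s ∈ uIcc a a', (sublevel F b' (ξ s)).Nonempty →
      |lengthDensity F b' h ξ s| ≤ B := by
  have hK : IsCompact (ξ '' uIcc a a') := isCompact_uIcc.image hξ.continuous
  obtain ⟨R, hR0, hR⟩ := hF.exists_norm_le hK b
  obtain ⟨H, hH⟩ := hK.exists_bound_of_continuousOn hh.continuousOn
  refine ⟨H * (R * C), fun b' hb' s hs hne => ?_⟩
  have hs' : ξ s ∈ ξ '' uIcc a a' := mem_image_of_mem ξ hs
  have hσ := abs_suppFn_le hne (fun q hq => hR _ hs' q (le_trans hq hb')) (deriv ξ s)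
  rw [lengthDensity, abs_mul]
  gcongr
  · exact (norm_nonneg _).trans (hH _ hs')
  · exact hH _ hs'
  · exact hσ.trans (mul_le_mul_of_nonneg_left (norm_deriv_le_of_lipschitz hξ) hR0)

theorem measurable_lengthDensity (hF : IsLocallyCoercive F)
    (hFc : Continuous (Function.uncurry F)) (hne : ∀ y, (sublevel F b y).Nonempty)
    (hh : Continuous h) (hξ : Continuous ξ) : Measurable (lengthDensity F b h ξ) := by
  have hσ : Measurable fun z : Euc m × Euc m => suppFn F b z.1 z.2 :=
    (upperSemicontinuous_suppFn hF hFc hne).measurable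
  have hξ' : Measurable fun s => (ξ s, deriv ξ s) := hξ.measurable.prodMk (measurable_deriv ξ)
  have hσξ : Measurable fun s => suppFn F b (ξ s) (deriv ξ s) := (hσ.comp hξ' :)
  have hhξ : Measurable fun s => h (ξ s) := (hh.comp hξ).measurable
  exact hhξ.mul hσξ

theorem intervalIntegrable_lengthDensity (hF : IsLocallyCoercive F)
    (hFc : Continuous (Function.uncurry F)) (hne : ∀ y, (sublevel F b y).Nonempty)
    (hh : Continuous h) (hξ : LipschitzWith C ξ) (a a' : ℝ) :
    IntervalIntegrable (lengthDensity F b h ξ) volume a a' := by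
  obtain ⟨B, hB⟩ := exists_abs_lengthDensity_le hF hh hξ b a a'
  refine (intervalIntegrable_const (c := B)).mono_fun'
    (measurable_lengthDensity hF hFc hne hh hξ.continuous).aestronglyMeasurable ?_
  filter_upwards [ae_restrict_mem measurableSet_uIoc] with s hs
  exact hB b le_rfl s (uIoc_subset_uIcc hs) (hne _)

theorem intervalIntegrable_suppFn (hF : IsLocallyCoercive F)
    (hFc : Continuous (Function.uncurry F)) (hne : ∀ y, (sublevel F b y).Nonempty)
    (hξ : LipschitzWith C ξ) (a a' : ℝ) :
    IntervalIntegrable (fun s => suppFn F b (ξ s) (deriv ξ s)) volume a a' := by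
  simpa only [lengthDensity_one] using
    intervalIntegrable_lengthDensity hF hFc hne (continuous_const (y := 1)) hξ a a'

theorem tendsto_intrinsicLen_nhdsGT (hF : IsLocallyCoercive F)
    (hFc : Continuous (Function.uncurry F)) (hne : ∀ y, (sublevel F b y).Nonempty)
    (hξ : LipschitzWith C ξ) :
    Tendsto (fun b' => intrinsicLen F b' ξ) (𝓝[>] b) (𝓝 (intrinsicLen F b ξ)) := by
  obtain ⟨B, hB⟩ := exists_abs_lengthDensity_le hF (continuous_const (y := 1)) hξ (b + 1) 0 1
  have hne' : ∀ b', b ≤ b' → ∀ y, (sublevel F b' y).Nonempty := fun b' hb' y =>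
    (hne y).mono (sublevel_subset_sublevel hb')
  refine intervalIntegral.tendsto_integral_filter_of_dominated_convergence (fun _ => B) ?_ ?_
    intervalIntegrable_const (ae_of_all _ fun s _ => tendsto_suppFn_nhdsGT hF hFc (hne _) _)
  · filter_upwards [self_mem_nhdsWithin] with b' hb'
    exact (intervalIntegrable_suppFn hF hFc (hne' b' (mem_Ioi.1 hb').le) hξ 0 1
      ).def'.aestronglyMeasurable
  · filter_upwards [Ioc_mem_nhdsGT (lt_add_one b)] with b' hb'
    refine ae_of_all _ fun s hs => ?_
    simpa only [lengthDensity_one, Real.norm_eq_abs] using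
      hB b' hb'.2 s (uIoc_subset_uIcc hs) (hne' b' hb'.1.le _)

theorem eventually_intrinsicLen_add_le (hF : IsLocallyCoercive F)
    (hFc : Continuous (Function.uncurry F)) {b' : ℝ} (hbb' : b < b')
    (hne : ∀ y, (sublevel F b y).Nonempty) (hξ : LipschitzWith C ξ) :
    ∀ᶠ w in 𝓝 (0 : Euc m), intrinsicLen F b (fun s => ξ s + w) ≤ intrinsicLen F b' ξ := by
  have hsub : ∀ᶠ w in 𝓝 (0 : Euc m), ∀ s ∈ Icc (0 : ℝ) 1,
      sublevel F b (ξ s + w) ⊆ sublevel F b' (ξ s) := by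
    refine isCompact_Icc.eventually_forall_of_forall_eventually fun s _ => ?_
    have hξw : Continuous fun x : Euc m × ℝ => ξ x.2 + x.1 :=
      (hξ.continuous.comp continuous_snd).add continuous_fst
    refine hF.eventually_forall_of_le hFc (P := fun x q => F (ξ x.2) q ≤ b') hξw.continuousAt
      (continuousAt_const (y := b)) fun q hq => ?_
    have hFξ : Continuous fun z : (Euc m × ℝ) × Euc m => F (ξ z.1.2) z.2 :=
      hFc.comp ((hξ.continuous.comp (continuous_snd.comp continuous_fst)).prodMk continuous_snd)
    rw [add_zero] at hq
    exact (hFξ.tendsto ((0, s), q)).eventually_lt_const (hq.trans_lt hbb') |>.mono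
      fun z hz => hz.le
  filter_upwards [hsub] with w hw
  have hξw : LipschitzWith C fun s => ξ s + w := by simpa using hξ.add (LipschitzWith.const w)
  refine intervalIntegral.integral_mono_on zero_le_one
    (intervalIntegrable_suppFn hF hFc hne hξw 0 1) (intervalIntegrable_suppFn hF hFc
      (fun y => (hne y).mono (sublevel_subset_sublevel hbb'.le)) hξ 0 1) fun s hs => ?_
  simp only [deriv_add_const]
  exact suppFn_mono_of_subset hF (hne _) (hw s hs) _

end Length

section Calculus

theorem exists_mem_ball_isMaxOn_closedBall {X : Type*} [PseudoMetricSpace X] [ProperSpace X]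
    {f : X → ℝ} {x : X} {r : ℝ} (hr : 0 ≤ r) (hf : UpperSemicontinuousOn f (closedBall x r))
    (hlt : ∀ z ∈ sphere x r, f z < f x) : ∃ z ∈ ball x r, IsMaxOn f (closedBall x r) z := by
  obtain ⟨z, hz, hmax⟩ := hf.exists_isMaxOn (nonempty_closedBall.2 hr) (isCompact_closedBall x r)
  refine ⟨z, lt_of_le_of_ne (mem_closedBall.1 hz) fun hzr => ?_, hmax⟩
  exact (hlt z hzr).not_ge (hmax (mem_closedBall_self hr))

theorem exists_contDiff_eventuallyEq {E G : Type*} [NormedAddCommGroup E] [NormedSpace ℝ E]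
    [HasContDiffBump E] [NormedAddCommGroup G] [NormedSpace ℝ G] {n : ℕ} {φ : E → G} {x : E}
    (hφ : ContDiffAt ℝ n φ x) : ∃ ψ : E → G, ContDiff ℝ n ψ ∧ ψ =ᶠ[𝓝 x] φ := by
  obtain ⟨ε, hε, hball⟩ := Metric.eventually_nhds_iff_ball.1 (hφ.eventually (by simp))
  let f : ContDiffBump x := ⟨ε / 3, ε / 2, by linarith, by linarith⟩
  refine ⟨fun w => f w • φ w, contDiff_iff_contDiffAt.2 fun w => ?_, ?_⟩
  · by_cases hw : w ∈ tsupport f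
    · refine f.contDiff.contDiffAt.smul (hball w ?_)
      rw [f.tsupport_eq] at hw
      exact closedBall_subset_ball (half_lt_self hε) hw
    · have hzero : (fun w => f w • φ w) =ᶠ[𝓝 w] fun _ => 0 := by
        filter_upwards [notMem_tsupport_iff_eventuallyEq.1 hw] with v hv
        rw [hv, Pi.zero_apply, zero_smul]
      exact contDiffAt_const.congr_of_eventuallyEq hzero
  · filter_upwards [f.eventuallyEq_one] with w hw
    rw [hw, Pi.one_apply, one_smul]

theorem ae_differentiableAt_of_locallyLipschitz {E G : Type*} [NormedAddCommGroup E]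
    [NormedSpace ℝ E] [FiniteDimensional ℝ E] [MeasurableSpace E] [BorelSpace E]
    [NormedAddCommGroup G] [NormedSpace ℝ G] [FiniteDimensional ℝ G] {μ : Measure E}
    [μ.IsAddHaarMeasure] {f : E → G} (hf : LocallyLipschitz f) :
    ∀ᵐ x ∂μ, DifferentiableAt ℝ f x := by
  have := FiniteDimensional.proper ℝ E
  refine measure_null_of_locally_null _ fun x _ => ?_
  obtain ⟨K, t, ht, hK⟩ := hf x
  refine ⟨interior t ∩ {z | DifferentiableAt ℝ f z}ᶜ,
    inter_comm _ _ ▸ inter_mem_nhdsWithin _ (interior_mem_nhds.2 ht), ?_⟩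
  refine measure_mono_null (fun z hz => ?_)
    (ae_iff.1 (hK.ae_differentiableWithinAt_of_mem (μ := μ)))
  exact fun hd => hz.2
    ((hd (interior_subset hz.1)).differentiableAt (mem_interior_iff_mem_nhds.1 hz.1))

variable {H : Type*} [NormedAddCommGroup H] [InnerProductSpace ℝ H]

theorem contDiff_inner_add_mul_norm_sub_sq (p x : H) (c : ℝ) {n : WithTop ℕ∞} :
    ContDiff ℝ n fun w : H => ⟪p, w⟫ + c * ‖w - x‖ ^ 2 :=
  (contDiff_const.inner ℝ contDiff_id).add
    (contDiff_const.mul ((contDiff_id.sub contDiff_const).norm_sq ℝ))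

theorem hasGradientAt_inner_add_mul_norm_sub_sq [CompleteSpace H] (p x z : H) (c : ℝ) :
    HasGradientAt (fun w : H => ⟪p, w⟫ + c * ‖w - x‖ ^ 2) (p + (2 * c) • (z - x)) z := by
  rw [hasGradientAt_iff_hasFDerivAt]
  refine ((innerSL ℝ p).hasFDerivAt.add
    (((hasFDerivAt_id z).sub_const x).norm_sq.const_mul c)).congr_fderiv ?_
  ext w
  simp
  ring

theorem contDiffAt_mul_norm_sub {y z : H} (hzy : z ≠ y) (L : ℝ) {n : WithTop ℕ∞} :
    ContDiffAt ℝ n (fun w : H => L * ‖w - y‖) z :=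
  contDiffAt_const.mul ((contDiffAt_id.sub contDiffAt_const).norm ℝ (sub_ne_zero.2 hzy))

theorem norm_gradient_mul_norm_sub [CompleteSpace H] {y z : H} (hzy : z ≠ y) (L : ℝ) :
    ‖gradient (fun w : H => L * ‖w - y‖) z‖ = |L| := by
  have : Nontrivial H := ⟨z, y, hzy⟩
  have hnorm : DifferentiableAt ℝ (fun w : H => ‖w‖) (z - y) :=
    (contDiffAt_norm (n := 1) ℝ (sub_ne_zero.2 hzy)).differentiableAt one_ne_zero
  have hfderiv : fderiv ℝ (fun w : H => L * ‖w - y‖) z =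
      L • fderiv ℝ (fun w : H => ‖w‖) (z - y) := by
    rw [fderiv_const_mul (hnorm.comp z (by fun_prop)), fderiv_comp_sub (f := fun w : H => ‖w‖)]
  rw [gradient, LinearIsometryEquiv.norm_map, hfderiv, norm_smul, norm_fderiv_norm hnorm, mul_one,
    Real.norm_eq_abs]

end Calculus

section Subsolution

variable {m : ℕ} {F : Euc m → Euc m → ℝ} {b b' : ℝ} {Ω : Set (Euc m)} {u : Euc m → ℝ}

theorem IsVSubOn.mono_level (hu : IsVSubOn F b Ω u) (hbb' : b ≤ b') : IsVSubOn F b' Ω u :=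
  ⟨hu.1, fun ψ hψ y hy hmax => (hu.2 ψ hψ y hy hmax).trans hbb'⟩

theorem IsVSubOn.le_of_contDiffAt (hu : IsVSubOn F b Ω u) {φ : Euc m → ℝ} {z : Euc m}
    (hz : z ∈ Ω) (hφ : ContDiffAt ℝ 1 φ z) (hmax : IsLocalMaxOn (fun w => u w - φ w) Ω z) :
    F z (gradient φ z) ≤ b := by
  obtain ⟨ψ, hψ, hψφ⟩ := exists_contDiff_eventuallyEq (n := 1) hφ
  rw [← hψφ.gradient_eq]
  refine hu.2 ψ hψ z hz ?_
  filter_upwards [hmax, nhdsWithin_le_nhds hψφ] with w hw hwψ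
  rwa [hwψ, hψφ.eq_of_nhds]

theorem IsVSubOn.exists_isMaxOn_sub (hu : IsVSubOn F b Ω u) {φ : Euc m → ℝ} (hφ : Continuous φ)
    {x : Euc m} {r : ℝ} (hr : 0 ≤ r) (hΩ : closedBall x r ⊆ Ω)
    (hlt : ∀ z ∈ sphere x r, u z - φ z < u x - φ x) :
    ∃ z ∈ ball x r, IsMaxOn (fun w => u w - φ w) (closedBall x r) z ∧
      (ContDiffAt ℝ 1 φ z → F z (gradient φ z) ≤ b) := by
  have husc : UpperSemicontinuousOn (fun w => u w - φ w) (closedBall x r) := by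
    have hneg : UpperSemicontinuousOn (fun w => -φ w) (closedBall x r) :=
      hφ.neg.continuousOn.upperSemicontinuousOn
    simpa only [sub_eq_add_neg] using (hu.1.mono hΩ).add hneg
  obtain ⟨z, hz, hmax⟩ := exists_mem_ball_isMaxOn_closedBall hr husc hlt
  refine ⟨z, hz, hmax, fun hφz => hu.le_of_contDiffAt (hΩ (ball_subset_closedBall hz)) hφz ?_⟩
  exact (hmax.isLocalMax (closedBall_mem_nhds_of_mem hz)).on Ω

/-- Test functions: the linear part of `u` at `x` plus a steep paraboloid. -/
theorem IsVSubOn.exists_le_of_hasGradientAt (hu : IsVSubOn F b Ω u) {x p : Euc m}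
    (hΩ : Ω ∈ 𝓝 x) (hp : HasGradientAt u p x) {ε : ℝ} (hε : 0 < ε) :
    ∃ z q, dist z x < ε ∧ dist q p < ε ∧ F z q ≤ b := by
  obtain ⟨r₀, hr₀, hball⟩ := Metric.eventually_nhds_iff_ball.1
    (((hasGradientAt_iff_isLittleO.1 hp).def (by positivity : 0 < ε / 5)).and hΩ)
  obtain ⟨r, hr, hrlt⟩ := exists_between (lt_min hr₀ hε)
  have hr₀ball : closedBall x r ⊆ ball x r₀ :=
    closedBall_subset_ball (hrlt.trans_le (min_le_left _ _))
  set c := 2 * (ε / 5) / r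
  have hcr : c * r = 2 * (ε / 5) := div_mul_cancel₀ _ hr.ne'
  have hsphere : ∀ z ∈ sphere x r,
      u z - (⟪p, z⟫ + c * ‖z - x‖ ^ 2) < u x - (⟪p, x⟫ + c * ‖x - x‖ ^ 2) := by
    intro z hz
    have hexp := (le_abs_self _).trans (hball z (hr₀ball (sphere_subset_closedBall hz))).1
    rw [inner_sub_right, mem_sphere_iff_norm.1 hz] at hexp
    rw [mem_sphere_iff_norm.1 hz, sub_self, norm_zero, sq, ← mul_assoc, hcr]
    linarith [mul_pos (div_pos hε (by norm_num : (0 : ℝ) < 5)) hr]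
  obtain ⟨z, hz, -, hFz⟩ := hu.exists_isMaxOn_sub
    (contDiff_inner_add_mul_norm_sub_sq p x c (n := 1)).continuous hr.le
    (fun z hz => (hball z (hr₀ball hz)).2) hsphere
  refine ⟨z, _, (mem_ball.1 hz).trans (hrlt.trans_le (min_le_right _ _)), ?_,
    hFz (contDiff_inner_add_mul_norm_sub_sq p x c).contDiffAt⟩
  have : 0 ≤ c := by positivity
  rw [(hasGradientAt_inner_add_mul_norm_sub_sq p x z c).gradient, dist_eq_norm,
    add_sub_cancel_left, norm_smul, Real.norm_of_nonneg (by positivity)]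
  calc 2 * c * ‖z - x‖ ≤ 2 * c * r := by gcongr; exact (mem_ball_iff_norm.1 hz).le
    _ = 2 * (c * r) := mul_assoc 2 c r
    _ < ε := by rw [hcr]; linarith

theorem IsVSubOn.le_of_hasGradientAt (hu : IsVSubOn F b Ω u)
    (hFc : Continuous (Function.uncurry F)) {x p : Euc m} (hΩ : Ω ∈ 𝓝 x)
    (hp : HasGradientAt u p x) : F x p ≤ b := by
  have hclosed : IsClosed {z : Euc m × Euc m | F z.1 z.2 ≤ b} := isClosed_le hFc continuous_const
  suffices (x, p) ∈ closure {z : Euc m × Euc m | F z.1 z.2 ≤ b} from hclosed.closure_subset this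
  refine Metric.mem_closure_iff.2 fun ε hε => ?_
  obtain ⟨z, q, hz, hq, hzq⟩ := hu.exists_le_of_hasGradientAt hΩ hp hε
  exact ⟨(z, q), hzq, by simpa only [Prod.dist_eq, dist_comm x, dist_comm p] using max_lt hz hq⟩

/-- The cone with vertex `(y, u y)` is a test function away from `y`, and is too steep there. -/
theorem IsVSubOn.le_add_mul_norm_sub (hu : IsVSubOn F b Ω u) {y : Euc m} {r R C L : ℝ}
    (hr : 0 ≤ r) (hΩ : closedBall y r ⊆ Ω)
    (hR : ∀ z ∈ closedBall y r, ∀ q, F z q ≤ b → ‖q‖ ≤ R) (hC : ∀ z ∈ sphere y r, u z ≤ C)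
    (hRL : R < L) (hCL : C - u y < L * r) :
    ∀ z ∈ closedBall y r, u z ≤ u y + L * ‖z - y‖ := by
  have hsphere : ∀ z ∈ sphere y r, u z - L * ‖z - y‖ < u y - L * ‖y - y‖ := by
    intro z hz
    rw [mem_sphere_iff_norm.1 hz, sub_self, norm_zero]
    linarith [hC z hz]
  obtain ⟨z, hz, hmax, hFz⟩ := hu.exists_isMaxOn_sub (by fun_prop) hr hΩ hsphere
  obtain rfl : z = y := by
    by_contra hzy
    have hgrad := hR z (ball_subset_closedBall hz) _ (hFz (contDiffAt_mul_norm_sub hzy L))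
    rw [norm_gradient_mul_norm_sub hzy] at hgrad
    exact (hRL.trans_le (le_abs_self L)).not_ge hgrad
  intro w hw
  have hle : u w - L * ‖w - z‖ ≤ u z - L * ‖z - z‖ := hmax hw
  rw [sub_self, norm_zero] at hle
  linarith

theorem IsVSubOn.locallyLipschitz (hF : IsLocallyCoercive F) (hu : IsVSubOn F b univ u) :
    LocallyLipschitz u := by
  intro x
  obtain ⟨R, hR0, hR⟩ := hF.exists_norm_le (isCompact_closedBall x 2) b
  obtain ⟨C, hC⟩ := (hu.1.mono (subset_univ _)).bddAbove_of_isCompact (isCompact_closedBall x 2)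
  have hball : ∀ {y}, y ∈ closedBall x (1 / 2) → closedBall y 1 ⊆ closedBall x 2 := fun hy =>
    closedBall_subset_closedBall' (by linarith [mem_closedBall.1 hy])
  have cone : ∀ y ∈ closedBall x (1 / 2), ∀ L, R < L → C - u y < L →
      ∀ z ∈ closedBall y 1, u z ≤ u y + L * ‖z - y‖ := fun y hy L hRL hCL =>
    hu.le_add_mul_norm_sub zero_le_one (subset_univ _) (fun z hz => hR z (hball hy hz))
      (fun z hz => hC (mem_image_of_mem u (hball hy (sphere_subset_closedBall hz)))) hRL
      (by rwa [mul_one])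
  have lower : ∀ y ∈ closedBall x (1 / 2), C - u y ≤ max R (2 * (C - u x) + 1) := by
    intro y hy
    by_contra! hlt
    obtain ⟨hRlt, hxlt⟩ := max_lt_iff.1 hlt
    have hyx : ‖x - y‖ ≤ 1 / 2 := by rw [← dist_eq_norm, dist_comm]; exact hy
    have hx := cone y hy (C - u y + 1) (by linarith) (by linarith) x
      (mem_closedBall_iff_norm.2 (hyx.trans (by norm_num)))
    linarith [mul_le_mul_of_nonneg_left hyx (by linarith : 0 ≤ C - u y + 1)]
  set D := max R (2 * (C - u x) + 1) + 1
  have hRD : R < D := (le_max_left _ _).trans_lt (lt_add_one _)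
  refine ⟨⟨D, hR0.trans hRD.le⟩, closedBall x (1 / 2), closedBall_mem_nhds x (by norm_num),
    LipschitzOnWith.of_le_add_mul _ fun z hz y hy => ?_⟩
  rw [dist_eq_norm]
  refine cone y hy D hRD ((lower y hy).trans_lt (lt_add_one _)) z (mem_closedBall.2 ?_)
  linarith [dist_triangle_right z y x, mem_closedBall.1 hz, mem_closedBall.1 hy]

end Subsolution

section Curve

theorem absolutelyContinuousOnInterval_of_locallyLipschitz {X : Type*} [PseudoMetricSpace X]
    {f : ℝ → X} (hf : LocallyLipschitz f) (a b : ℝ) : AbsolutelyContinuousOnInterval f a b := by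
  obtain ⟨K, hK⟩ := (hf.locallyLipschitzOn (s := uIcc a b)).exists_lipschitzOnWith_of_compact
    isCompact_uIcc
  exact hK.absolutelyContinuousOnInterval

theorem hasDerivAt_comp_of_hasGradientAt {H : Type*} [NormedAddCommGroup H]
    [InnerProductSpace ℝ H] [CompleteSpace H] {g : H → ℝ} {ζ : ℝ → H} {p v : H} {s : ℝ}
    (hg : HasGradientAt g p (ζ s)) (hζ : HasDerivAt ζ v s) :
    HasDerivAt (fun t => g (ζ t)) ⟪p, v⟫ s := by
  simpa [Function.comp_def] using (hasGradientAt_iff_hasFDerivAt.1 hg).comp_hasDerivAt s hζ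

theorem ae_ae_add_of_ae {G α : Type*} [AddGroup G] [MeasurableSpace G] [MeasurableAdd₂ G]
    {μ : Measure G} [SFinite μ] [μ.IsAddLeftInvariant] [MeasurableSpace α] {ν : Measure α}
    [SFinite ν] {ξ : α → G} (hξ : Measurable ξ) {p : G → Prop} (hp : MeasurableSet {x | p x})
    (h : ∀ᵐ x ∂μ, p x) : ∀ᵐ w ∂μ, ∀ᵐ s ∂ν, p (ξ s + w) := by
  have hmeas : MeasurableSet {z : α × G | p (ξ z.1 + z.2)} :=
    ((hξ.comp measurable_fst).add measurable_snd) hp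
  refine (Measure.ae_ae_comm (p := fun s w => p (ξ s + w)) hmeas).1 (ae_of_all _ fun s => ?_)
  exact (measurePreserving_add_left μ (ξ s)).quasiMeasurePreserving.ae h

variable {m : ℕ} {F : Euc m → Euc m → ℝ} {b : ℝ} {u : Euc m → ℝ} {ξ : ℝ → Euc m} {C : NNReal}

theorem sub_le_integral_suppFn (hF : IsLocallyCoercive F) (hFc : Continuous (Function.uncurry F))
    (hne : ∀ y, (sublevel F b y).Nonempty) {g : Euc m → ℝ} (hg : LocallyLipschitz g)
    (hξ : LipschitzWith C ξ) {a a' : ℝ} (haa' : a ≤ a')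
    (hgrad : ∀ᵐ s : ℝ, s ∈ Icc a a' → ∃ p, HasGradientAt g p (ξ s) ∧ F (ξ s) p ≤ b) :
    g (ξ a') - g (ξ a) ≤ ∫ s in a..a', suppFn F b (ξ s) (deriv ξ s) := by
  have hac : AbsolutelyContinuousOnInterval (fun s => g (ξ s)) a a' :=
    absolutelyContinuousOnInterval_of_locallyLipschitz (hg.comp hξ.locallyLipschitz) a a'
  rw [← hac.integral_deriv_eq_sub]
  refine intervalIntegral.integral_mono_ae_restrict haa' hac.intervalIntegrable_deriv
    (intervalIntegrable_suppFn hF hFc hne hξ a a') ?_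
  filter_upwards [ae_restrict_mem measurableSet_Icc, ae_restrict_of_ae hgrad,
    ae_restrict_of_ae hξ.ae_differentiableAt_real] with s hs hps hξs
  obtain ⟨p, hp, hFp⟩ := hps hs
  rw [(hasDerivAt_comp_of_hasGradientAt hp hξs.hasDerivAt).deriv]
  exact inner_le_suppFn hF hFp _

theorem IsVSubOn.ae_sub_le_intrinsicLen_add (hu : IsVSubOn F b univ u) (hF : IsLocallyCoercive F)
    (hFc : Continuous (Function.uncurry F)) (hne : ∀ y, (sublevel F b y).Nonempty)
    (hξ : LipschitzWith C ξ) :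
    ∀ᵐ w : Euc m, u (ξ 1 + w) - u (ξ 0 + w) ≤ intrinsicLen F b fun s => ξ s + w := by
  have hu_lip := hu.locallyLipschitz hF
  filter_upwards [ae_ae_add_of_ae (ν := (volume : Measure ℝ)) hξ.continuous.measurable
    (measurableSet_of_differentiableAt ℝ u) (ae_differentiableAt_of_locallyLipschitz hu_lip)]
    with w hw
  have hξw : LipschitzWith C fun s => ξ s + w := by simpa using hξ.add (LipschitzWith.const w)
  refine sub_le_integral_suppFn hF hFc hne hu_lip hξw zero_le_one (hw.mono fun s hs _ => ?_)
  exact ⟨_, hs.hasGradientAt, hu.le_of_hasGradientAt hFc univ_mem hs.hasGradientAt⟩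

/-- A Lipschitz curve may lie entirely in the null set where `u` is not differentiable, but almost
none of its translates sees that set on a set of positive measure of times. -/
theorem IsVSubOn.sub_le_intrinsicLen (hu : IsVSubOn F b univ u) (hF : IsLocallyCoercive F)
    (hFc : Continuous (Function.uncurry F)) (hne : ∀ y, (sublevel F b y).Nonempty)
    (hξ : LipschitzWith C ξ) : u (ξ 1) - u (ξ 0) ≤ intrinsicLen F b ξ := by
  refine ge_of_tendsto (tendsto_intrinsicLen_nhdsGT hF hFc hne hξ) ?_
  filter_upwards [self_mem_nhdsWithin] with b' hbb'
  have hfreq : ∃ᶠ w in 𝓝 (0 : Euc m), u (ξ 1 + w) - u (ξ 0 + w) ≤ intrinsicLen F b' ξ := by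
    have hdense := Measure.dense_of_ae (hu.ae_sub_le_intrinsicLen_add hF hFc hne hξ)
    refine ((mem_closure_iff_frequently.1 (hdense 0)).and_eventually
      (eventually_intrinsicLen_add_le hF hFc hbb' hne hξ)).mono fun w hw => ?_
    exact le_trans hw.1 hw.2
  have hucont : Continuous fun w => u (ξ 1 + w) - u (ξ 0 + w) := by
    have := (hu.locallyLipschitz hF).continuous
    fun_prop
  have hlim := hucont.tendsto 0
  simp only [add_zero] at hlim
  exact le_of_tendsto_of_frequently hlim hfreq

end Curve

section Level

variable {m : ℕ} {F : Euc m → Euc m → ℝ} {b : ℝ}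

/-- The inclusion expresses `b ≥ c` without reference to the junk value that `critVal` takes when
the subsolution levels are empty or unbounded below. -/
theorem Ioi_subset_subsolLevels_of_critVal_le (hfin : (subsolLevels F).Nonempty)
    (hb : critVal F ≤ b) : Ioi b ⊆ subsolLevels F := by
  intro b' hb'
  obtain ⟨b₀, ⟨u, hu⟩, hb₀⟩ := exists_lt_of_csInf_lt hfin (hb.trans_lt hb')
  exact ⟨u, hu.mono_level hb₀.le⟩

theorem IsVSubOn.sublevel_nonempty {u : Euc m → ℝ} (hu : IsVSubOn F b univ u)
    (hF : IsLocallyCoercive F) (hFc : Continuous (Function.uncurry F)) (y : Euc m) :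
    (sublevel F b y).Nonempty := by
  have hclosed : IsClosed {y | (sublevel F b y).Nonempty} :=
    (isClosed_setOf_sublevel_nonempty hF hFc).preimage (Continuous.prodMk_right b)
  have hae : ∀ᵐ y : Euc m, (sublevel F b y).Nonempty := by
    filter_upwards [ae_differentiableAt_of_locallyLipschitz (hu.locallyLipschitz hF)] with y hy
    exact ⟨_, hu.le_of_hasGradientAt hFc univ_mem hy.hasGradientAt⟩
  exact hclosed.closure_subset (Measure.dense_of_ae hae y)

theorem sublevel_nonempty_of_Ioi_subset (hF : IsLocallyCoercive F)
    (hFc : Continuous (Function.uncurry F)) (hb : Ioi b ⊆ subsolLevels F) (y : Euc m) :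
    (sublevel F b y).Nonempty := by
  have hlim : Tendsto (fun b' => (b', y)) (𝓝[>] b) (𝓝 (b, y)) :=
    (tendsto_nhdsWithin_of_tendsto_nhds tendsto_id).prodMk_nhds tendsto_const_nhds
  refine (isClosed_setOf_sublevel_nonempty hF hFc).mem_of_tendsto hlim ?_
  filter_upwards [self_mem_nhdsWithin] with b' hb'
  obtain ⟨u, hu⟩ := hb hb'
  exact hu.sublevel_nonempty hF hFc y

theorem intrinsicLen_add_intrinsicLen_nonneg (hF : IsLocallyCoercive F)
    (hFc : Continuous (Function.uncurry F)) (hb : Ioi b ⊆ subsolLevels F) {y₁ y₂ : Euc m}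
    {ξ ζ : ℝ → Euc m} (hξ : IsAdmCurve ξ y₁ y₂) (hζ : IsAdmCurve ζ y₂ y₁) :
    0 ≤ intrinsicLen F b ξ + intrinsicLen F b ζ := by
  obtain ⟨⟨C, hξC⟩, rfl, rfl⟩ := hξ
  obtain ⟨⟨D, hζD⟩, hζ0, hζ1⟩ := hζ
  have hne := sublevel_nonempty_of_Ioi_subset hF hFc hb
  refine ge_of_tendsto ((tendsto_intrinsicLen_nhdsGT hF hFc hne hξC).add
    (tendsto_intrinsicLen_nhdsGT hF hFc hne hζD)) ?_
  filter_upwards [self_mem_nhdsWithin] with b' hbb'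
  obtain ⟨u, hu⟩ := hb hbb'
  have hξu := hu.sub_le_intrinsicLen hF hFc (hu.sublevel_nonempty hF hFc) hξC
  have hζu := hu.sub_le_intrinsicLen hF hFc (hu.sublevel_nonempty hF hFc) hζD
  rw [hζ0, hζ1] at hζu
  linarith

end Level

/-- The concatenation of two curves on `[0, 1]`, each run at double speed. Translating the second
curve to the endpoint of the first keeps the concatenation continuous for arbitrary `ξ` and `ζ`. -/
def curveTrans {m : ℕ} (ξ ζ : ℝ → Euc m) (s : ℝ) : Euc m :=
  ξ (min (2 * s) 1) + (ζ (max (2 * s - 1) 0) - ζ 0)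

section Concatenation

variable {m : ℕ} {F : Euc m → Euc m → ℝ} {b : ℝ} {h : Euc m → ℝ} {ξ ζ : ℝ → Euc m} {s : ℝ}
  {C D : NNReal} {x y z : Euc m}

theorem lipschitzWith_comp_mul_add {X : Type*} [PseudoEMetricSpace X] {f : ℝ → X}
    (hf : LipschitzWith C f) (c d : ℝ) : LipschitzWith (C * ‖c‖₊) fun s => f (c * s + d) := by
  refine hf.comp (LipschitzWith.of_dist_le_mul fun s t => ?_)
  rw [dist_add_right, Real.dist_eq, ← mul_sub, abs_mul, coe_nnnorm, Real.norm_eq_abs, Real.dist_eq]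

theorem isAdmCurve_lineMap (x y : Euc m) : IsAdmCurve (AffineMap.lineMap (k := ℝ) x y) x y :=
  ⟨⟨_, lipschitzWith_lineMap x y⟩, AffineMap.lineMap_apply_zero x y,
    AffineMap.lineMap_apply_one x y⟩

theorem curveTrans_eventuallyEq_left (hs : s < 1 / 2) :
    curveTrans ξ ζ =ᶠ[𝓝 s] fun t => ξ (2 * t + 0) := by
  filter_upwards [Iio_mem_nhds hs] with t ht
  have ht : t < 1 / 2 := ht
  rw [curveTrans, min_eq_left (by linarith), max_eq_right (by linarith), sub_self, add_zero,
    add_zero]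

theorem curveTrans_eventuallyEq_right (hs : 1 / 2 < s) (hξζ : ξ 1 = ζ 0) :
    curveTrans ξ ζ =ᶠ[𝓝 s] fun t => ζ (2 * t + -1) := by
  filter_upwards [Ioi_mem_nhds hs] with t ht
  have ht : 1 / 2 < t := ht
  rw [curveTrans, min_eq_right (by linarith), max_eq_left (by linarith), hξζ,
    add_sub_cancel, sub_eq_add_neg]

theorem lipschitzWith_curveTrans (hξ : LipschitzWith C ξ) (hζ : LipschitzWith D ζ) :
    LipschitzWith (C * 2 + D * 2) (curveTrans ξ ζ) := by
  have hdouble : LipschitzWith 2 fun s : ℝ => 2 * s := by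
    simpa using lipschitzWith_comp_mul_add (LipschitzWith.id (α := ℝ)) 2 0
  have hleft := hξ.comp (hdouble.min_const 1)
  have hright := hζ.comp ((hdouble.sub (LipschitzWith.const 1)).max_const 0)
  simpa [curveTrans, Function.comp_def] using! hleft.add (hright.sub (LipschitzWith.const (ζ 0)))

theorem IsAdmCurve.trans (hξ : IsAdmCurve ξ x y) (hζ : IsAdmCurve ζ y z) :
    IsAdmCurve (curveTrans ξ ζ) x z := by
  obtain ⟨⟨C, hC⟩, rfl, rfl⟩ := hξ
  obtain ⟨⟨D, hD⟩, hζ0, rfl⟩ := hζ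
  refine ⟨⟨_, lipschitzWith_curveTrans hC hD⟩, ?_, ?_⟩
  · simp [curveTrans]
  · norm_num [curveTrans, hζ0]

theorem lengthDensity_congr (hs : ξ =ᶠ[𝓝 s] ζ) :
    lengthDensity F b h ξ s = lengthDensity F b h ζ s := by
  rw [lengthDensity, lengthDensity, hs.deriv_eq, hs.eq_of_nhds]

theorem wIntrinsicLen_eq_integral_lengthDensity :
    wIntrinsicLen F b h ξ = ∫ s in (0 : ℝ)..1, lengthDensity F b h ξ s := rfl

theorem integral_lengthDensity_comp_mul_add {c : ℝ} (hc : 0 ≤ c) (d a a' : ℝ) :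
    ∫ s in a..a', lengthDensity F b h (fun s => ξ (c * s + d)) s =
      ∫ s in (c * a + d)..(c * a' + d), lengthDensity F b h ξ s := by
  rw [← intervalIntegral.smul_integral_comp_mul_add, ← intervalIntegral.integral_smul]
  refine intervalIntegral.integral_congr fun s _ => ?_
  have hderiv : deriv (fun s => ξ (c * s + d)) s = c • deriv ξ (c * s + d) := by
    rw [deriv_comp_mul_left c (fun s => ξ (s + d)), deriv_comp_add_const]
  rw [lengthDensity, lengthDensity, hderiv, suppFn_smul hc, smul_eq_mul, mul_left_comm]

theorem wIntrinsicLen_curveTrans (hF : IsLocallyCoercive F)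
    (hFc : Continuous (Function.uncurry F)) (hne : ∀ y, (sublevel F b y).Nonempty)
    (hh : Continuous h) (hξ : IsAdmCurve ξ x y) (hζ : IsAdmCurve ζ y z) :
    wIntrinsicLen F b h (curveTrans ξ ζ) = wIntrinsicLen F b h ξ + wIntrinsicLen F b h ζ := by
  obtain ⟨C, hC⟩ := (hξ.trans hζ).1
  have hint := intervalIntegrable_lengthDensity hF hFc hne hh hC
  simp only [wIntrinsicLen_eq_integral_lengthDensity]
  rw [← intervalIntegral.integral_add_adjacent_intervals (hint 0 (1 / 2)) (hint (1 / 2) 1)]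
  congr 1
  · calc
      _ = ∫ s in (0 : ℝ)..(1 / 2), lengthDensity F b h (fun s => ξ (2 * s + 0)) s :=
        intervalIntegral.integral_congr_Ioo_of_le (by norm_num) fun s hs =>
          lengthDensity_congr (curveTrans_eventuallyEq_left hs.2)
      _ = _ := by rw [integral_lengthDensity_comp_mul_add zero_le_two]; norm_num
  · calc
      _ = ∫ s in (1 / 2 : ℝ)..1, lengthDensity F b h (fun s => ζ (2 * s + -1)) s :=
        intervalIntegral.integral_congr_Ioo_of_le (by norm_num) fun s hs =>
          lengthDensity_congr (curveTrans_eventuallyEq_right hs.1 (hξ.2.2.trans hζ.2.1.symm))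
      _ = _ := by rw [integral_lengthDensity_comp_mul_add zero_le_two]; norm_num

theorem wIntrinsicLen_lineMap_le (hne : ∀ y, (sublevel F b y).Nonempty) {K : Set (Euc m)}
    (hK : Convex ℝ K) (hx : x ∈ K) (hy : y ∈ K) {R H : ℝ}
    (hR : ∀ z ∈ K, ∀ q, F z q ≤ b → ‖q‖ ≤ R) (hH : ∀ z ∈ K, ‖h z‖ ≤ H) :
    wIntrinsicLen F b h (AffineMap.lineMap (k := ℝ) x y) ≤ H * (R * dist x y) := by
  have hbound : ∀ s ∈ uIoc (0 : ℝ) 1,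
      ‖lengthDensity F b h (AffineMap.lineMap (k := ℝ) x y) s‖ ≤ H * (R * dist x y) := by
    intro s hs
    rw [uIoc_of_le zero_le_one] at hs
    have hsK := hK.lineMap_mem hx hy ⟨hs.1.le, hs.2⟩
    rw [lengthDensity, AffineMap.hasDerivAt_lineMap.deriv, norm_mul, dist_eq_norm']
    gcongr
    · exact (norm_nonneg _).trans (hH _ hx)
    · exact hH _ hsK
    · exact abs_suppFn_le (hne _) (hR _ hsK) _
  have := intervalIntegral.norm_integral_le_of_norm_le_const hbound
  rw [sub_zero, abs_one, mul_one] at this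
  exact (le_abs_self _).trans this

end Concatenation

section Distance

variable {m : ℕ} {F : Euc m → Euc m → ℝ} {b : ℝ} {h : Euc m → ℝ} {ξ : ℝ → Euc m} {C : NNReal}
  {x y z : Euc m}

theorem integral_suppFn_le_integral_lengthDensity (hF : IsLocallyCoercive F)
    (hFc : Continuous (Function.uncurry F)) (hne : ∀ y, (sublevel F b y).Nonempty)
    (hh : Continuous h) (hσ : ∀ y v, suppFn F b y v ≤ h y * suppFn F b y v)
    (hξ : LipschitzWith C ξ) {a a' : ℝ} (haa' : a ≤ a') :
    ∫ s in a..a', suppFn F b (ξ s) (deriv ξ s) ≤ ∫ s in a..a', lengthDensity F b h ξ s :=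
  intervalIntegral.integral_mono_on haa' (intervalIntegrable_suppFn hF hFc hne hξ a a')
    (intervalIntegrable_lengthDensity hF hFc hne hh hξ a a') fun _ _ => hσ _ _

theorem nonempty_setOf_wIntrinsicLen (F : Euc m → Euc m → ℝ) (b : ℝ) (h : Euc m → ℝ)
    (x y : Euc m) : {L : ℝ | ∃ ξ, IsAdmCurve ξ x y ∧ L = wIntrinsicLen F b h ξ}.Nonempty :=
  ⟨_, _, isAdmCurve_lineMap x y, rfl⟩

theorem bddBelow_setOf_wIntrinsicLen (hF : IsLocallyCoercive F)
    (hFc : Continuous (Function.uncurry F)) (hb : Ioi b ⊆ subsolLevels F) (hh : Continuous h)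
    (hσ : ∀ y v, suppFn F b y v ≤ h y * suppFn F b y v) (x y : Euc m) :
    BddBelow {L : ℝ | ∃ ξ, IsAdmCurve ξ x y ∧ L = wIntrinsicLen F b h ξ} := by
  refine ⟨-intrinsicLen F b (AffineMap.lineMap (k := ℝ) y x), ?_⟩
  rintro _ ⟨ξ, hξ, rfl⟩
  obtain ⟨C, hC⟩ := hξ.1
  have hloop := intrinsicLen_add_intrinsicLen_nonneg hF hFc hb hξ (isAdmCurve_lineMap y x)
  have hweight : intrinsicLen F b ξ ≤ wIntrinsicLen F b h ξ :=
    integral_suppFn_le_integral_lengthDensity hF hFc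
      (sublevel_nonempty_of_Ioi_subset hF hFc hb) hh hσ hC zero_le_one
  linarith

theorem wIntrinsicDist_le (hF : IsLocallyCoercive F)
    (hFc : Continuous (Function.uncurry F)) (hb : Ioi b ⊆ subsolLevels F) (hh : Continuous h)
    (hσ : ∀ y v, suppFn F b y v ≤ h y * suppFn F b y v) (hξ : IsAdmCurve ξ x y) :
    wIntrinsicDist F b h x y ≤ wIntrinsicLen F b h ξ :=
  csInf_le (bddBelow_setOf_wIntrinsicLen hF hFc hb hh hσ x y) ⟨ξ, hξ, rfl⟩

theorem le_wIntrinsicDist {l : ℝ} (hl : ∀ ξ, IsAdmCurve ξ x y → l ≤ wIntrinsicLen F b h ξ) :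
    l ≤ wIntrinsicDist F b h x y := by
  refine le_csInf (nonempty_setOf_wIntrinsicLen F b h x y) ?_
  rintro _ ⟨ξ, hξ, rfl⟩
  exact hl ξ hξ

theorem wIntrinsicDist_triangle (hF : IsLocallyCoercive F)
    (hFc : Continuous (Function.uncurry F)) (hb : Ioi b ⊆ subsolLevels F) (hh : Continuous h)
    (hσ : ∀ y v, suppFn F b y v ≤ h y * suppFn F b y v) (x y z : Euc m) :
    wIntrinsicDist F b h x z ≤ wIntrinsicDist F b h x y + wIntrinsicDist F b h y z := by
  rw [← sub_le_iff_le_add]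
  refine le_wIntrinsicDist fun ξ hξ => ?_
  rw [sub_le_comm]
  refine le_wIntrinsicDist fun ζ hζ => ?_
  rw [sub_le_iff_le_add', ← wIntrinsicLen_curveTrans hF hFc
    (sublevel_nonempty_of_Ioi_subset hF hFc hb) hh hξ hζ]
  exact wIntrinsicDist_le hF hFc hb hh hσ (hξ.trans hζ)

theorem locallyLipschitz_wIntrinsicDist (hF : IsLocallyCoercive F)
    (hFc : Continuous (Function.uncurry F)) (hb : Ioi b ⊆ subsolLevels F) (hh : Continuous h)
    (hσ : ∀ y v, suppFn F b y v ≤ h y * suppFn F b y v) (x : Euc m) :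
    LocallyLipschitz fun y => wIntrinsicDist F b h x y := by
  intro y
  have hK : IsCompact (closedBall y 1) := isCompact_closedBall y 1
  obtain ⟨R, hR0, hR⟩ := hF.exists_norm_le hK b
  obtain ⟨H, hH⟩ := hK.exists_bound_of_continuousOn hh.continuousOn
  have hH0 : 0 ≤ H := (norm_nonneg _).trans (hH y (mem_closedBall_self zero_le_one))
  refine ⟨⟨H * R, mul_nonneg hH0 hR0⟩, closedBall y 1, closedBall_mem_nhds y one_pos, ?_⟩
  refine LipschitzOnWith.of_le_add_mul _ fun z hz w hw => ?_
  calc wIntrinsicDist F b h x z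
      ≤ wIntrinsicDist F b h x w + wIntrinsicDist F b h w z :=
        wIntrinsicDist_triangle hF hFc hb hh hσ x w z
    _ ≤ wIntrinsicDist F b h x w + H * (R * dist w z) := by
        gcongr
        exact (wIntrinsicDist_le hF hFc hb hh hσ (isAdmCurve_lineMap w z)).trans
          (wIntrinsicLen_lineMap_le (sublevel_nonempty_of_Ioi_subset hF hFc hb)
            (convex_closedBall y 1) hw hz hR hH)
    _ = wIntrinsicDist F b h x w + H * R * dist z w := by rw [dist_comm, mul_assoc]

theorem wIntrinsicDist_le_integral_lengthDensity (hF : IsLocallyCoercive F)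
    (hFc : Continuous (Function.uncurry F)) (hb : Ioi b ⊆ subsolLevels F) (hh : Continuous h)
    (hσ : ∀ y v, suppFn F b y v ≤ h y * suppFn F b y v) (hξ : LipschitzWith C ξ) {a a' : ℝ}
    (haa' : a ≤ a') :
    wIntrinsicDist F b h (ξ a) (ξ a') ≤ ∫ s in a..a', lengthDensity F b h ξ s := by
  have hadm : IsAdmCurve (fun s => ξ ((a' - a) * s + a)) (ξ a) (ξ a') :=
    ⟨⟨_, lipschitzWith_comp_mul_add hξ _ _⟩, by simp, by simp⟩
  refine (wIntrinsicDist_le hF hFc hb hh hσ hadm).trans_eq ?_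
  rw [wIntrinsicLen_eq_integral_lengthDensity,
    integral_lengthDensity_comp_mul_add (sub_nonneg.2 haa')]
  simp

end Distance

section LastExit

theorem exists_eq_and_forall_Icc_le {α β : Type*} [ConditionallyCompleteLinearOrder α]
    [TopologicalSpace α] [OrderTopology α] [DenselyOrdered α] [LinearOrder β] [TopologicalSpace β]
    [OrderClosedTopology β] {f : α → β} {a b : α} {r : β} (hab : a ≤ b)
    (hf : ContinuousOn f (Icc a b)) (hr : r ∈ Icc (f b) (f a)) :
    ∃ t ∈ Icc a b, f t = r ∧ ∀ s ∈ Icc t b, f s ≤ r := by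
  have hcompact : IsCompact (Icc a b ∩ f ⁻¹' {r}) :=
    isCompact_Icc.of_isClosed_subset
      (hf.preimage_isClosed_of_isClosed isClosed_Icc isClosed_singleton) inter_subset_left
  obtain ⟨t, ⟨ht, htr⟩, hlast⟩ := hcompact.exists_isGreatest (intermediate_value_Icc' hab hf hr)
  refine ⟨t, ht, htr, fun s hs => ?_⟩
  by_contra! hrs
  obtain ⟨t', ht', ht'r⟩ := intermediate_value_Icc' hs.2
    (hf.mono (Icc_subset_Icc_left (ht.1.trans hs.1))) ⟨hr.1, hrs.le⟩
  have ht't : t' ≤ t := hlast ⟨⟨(ht.1.trans hs.1).trans ht'.1, ht'.2⟩, ht'r⟩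
  have hst' : s = t' := le_antisymm ht'.1 (ht't.trans hs.1)
  exact hrs.ne' (hst' ▸ ht'r)

end LastExit

section Supersolution

theorem hasGradientAt_add_inner {H : Type*} [NormedAddCommGroup H] [InnerProductSpace ℝ H]
    [CompleteSpace H] {ψ : H → ℝ} {p x : H} (hψ : HasGradientAt ψ p x) (e : H) :
    HasGradientAt (fun w => ψ w + ⟪e, w⟫) (p + e) x := by
  rw [hasGradientAt_iff_hasFDerivAt, map_add]
  exact hψ.hasFDerivAt.add (InnerProductSpace.toDual ℝ H e).hasFDerivAt

variable {m : ℕ} {F : Euc m → Euc m → ℝ} {b : ℝ} {h ψ : Euc m → ℝ} {ξ : ℝ → Euc m} {C : NNReal}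
  {x y : Euc m} {ε r : ℝ}

theorem exists_pos_forall_gradient_add_le (hFc : Continuous (Function.uncurry F))
    (hψ : ContDiff ℝ 1 ψ) (hy : F y (gradient ψ y) < b) :
    ∃ ε > 0, ∀ z ∈ closedBall y ε, ∀ e, ‖e‖ ≤ ε → F z (gradient ψ z + e) ≤ b := by
  have hgrad : Continuous (gradient ψ) :=
    (InnerProductSpace.toDual ℝ (Euc m)).symm.continuous.comp (hψ.continuous_fderiv one_ne_zero)
  have hcont : Continuous fun z : Euc m × Euc m => F z.1 (gradient ψ z.1 + z.2) :=
    hFc.comp (continuous_fst.prodMk ((hgrad.comp continuous_fst).add continuous_snd))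
  have hnhds : ∀ᶠ z in 𝓝 (y, (0 : Euc m)), F z.1 (gradient ψ z.1 + z.2) < b :=
    (hcont.tendsto _).eventually_lt_const (by simpa using hy)
  obtain ⟨ε, hε, hball⟩ := nhds_basis_closedBall.eventually_iff.1 hnhds
  refine ⟨ε, hε, fun z hz e he => (hball (x := (z, e)) ?_).le⟩
  rw [← closedBall_prod_same]
  exact ⟨hz, mem_closedBall_zero_iff.2 he⟩

/-- Add to `ψ` the linear function of slope `ε` in the direction of the chord of `ξ`. -/
theorem sub_add_mul_dist_le_integral_suppFn (hF : IsLocallyCoercive F)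
    (hFc : Continuous (Function.uncurry F)) (hne : ∀ y, (sublevel F b y).Nonempty)
    (hψ : ContDiff ℝ 1 ψ) (hξ : LipschitzWith C ξ) {a a' : ℝ} (haa' : a ≤ a') (hε : 0 ≤ ε)
    (hstrict : ∀ s ∈ Icc a a', ∀ e, ‖e‖ ≤ ε → F (ξ s) (gradient ψ (ξ s) + e) ≤ b) :
    ψ (ξ a') - ψ (ξ a) + ε * dist (ξ a') (ξ a) ≤
      ∫ s in a..a', suppFn F b (ξ s) (deriv ξ s) := by
  set v := ξ a' - ξ a with hv
  set e := (ε / ‖v‖) • v with he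
  have henorm : ‖e‖ ≤ ε := by
    rw [he, norm_smul, Real.norm_of_nonneg (by positivity), div_mul_eq_mul_div, mul_div_assoc]
    exact mul_le_of_le_one_right hε (div_self_le_one ‖v‖)
  have hev : ⟪e, ξ a'⟫ - ⟪e, ξ a⟫ = ε * dist (ξ a') (ξ a) := by
    rw [← inner_sub_right, ← hv, he, real_inner_smul_left, real_inner_self_eq_norm_mul_norm,
      dist_eq_norm, ← hv, ← mul_assoc]
    rcases eq_or_ne ‖v‖ 0 with hv0 | hv0
    · simp only [hv0, mul_zero]
    · rw [div_mul_cancel₀ _ hv0]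
  have hφ : ContDiff ℝ 1 fun w => ψ w + ⟪e, w⟫ := hψ.add (contDiff_const.inner ℝ contDiff_id)
  have hgain := sub_le_integral_suppFn hF hFc hne hφ.locallyLipschitz hξ haa' <|
    ae_of_all _ fun s hs => ⟨_, hasGradientAt_add_inner
      (hψ.differentiable one_ne_zero (ξ s)).hasGradientAt e, hstrict s hs e henorm⟩
  linarith

theorem wIntrinsicDist_add_mul_le_wIntrinsicLen (hF : IsLocallyCoercive F)
    (hFc : Continuous (Function.uncurry F)) (hb : Ioi b ⊆ subsolLevels F) (hh : Continuous h)
    (hσ : ∀ y v, suppFn F b y v ≤ h y * suppFn F b y v) (hψ : ContDiff ℝ 1 ψ)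
    (hmin : ∀ z ∈ closedBall y r,
      wIntrinsicDist F b h x y - ψ y ≤ wIntrinsicDist F b h x z - ψ z)
    (hε : 0 ≤ ε)
    (hstrict : ∀ z ∈ closedBall y r, ∀ e, ‖e‖ ≤ ε → F z (gradient ψ z + e) ≤ b)
    (hr : 0 ≤ r) (hrx : r ≤ dist x y) (hξ : IsAdmCurve ξ x y) :
    wIntrinsicDist F b h x y + ε * r ≤ wIntrinsicLen F b h ξ := by
  obtain ⟨⟨C, hC⟩, rfl, rfl⟩ := hξ
  have hne := sublevel_nonempty_of_Ioi_subset hF hFc hb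
  obtain ⟨t, ht, htr, hball⟩ := exists_eq_and_forall_Icc_le (f := fun s => dist (ξ s) (ξ 1))
    zero_le_one (hC.continuous.dist continuous_const).continuousOn
    ⟨(dist_self (ξ 1)).trans_le hr, hrx⟩
  have hbefore := wIntrinsicDist_le_integral_lengthDensity hF hFc hb hh hσ hC ht.1
  have hafter : ψ (ξ 1) - ψ (ξ t) + ε * r ≤ ∫ s in t..1, lengthDensity F b h ξ s := by
    rw [← htr, dist_comm]
    exact (sub_add_mul_dist_le_integral_suppFn hF hFc hne hψ hC ht.2 hε
      fun s hs => hstrict _ (hball s hs)).trans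
      (integral_suppFn_le_integral_lengthDensity hF hFc hne hh hσ hC ht.2)
  have hsplit := intervalIntegral.integral_add_adjacent_intervals
    (intervalIntegrable_lengthDensity hF hFc hne hh hC 0 t)
    (intervalIntegrable_lengthDensity hF hFc hne hh hC t 1)
  have hmin_t := hmin (ξ t) htr.le
  rw [wIntrinsicLen_eq_integral_lengthDensity, ← hsplit]
  linarith

theorem le_gradient_of_isLocalMin_wIntrinsicDist_sub (hF : IsLocallyCoercive F)
    (hFc : Continuous (Function.uncurry F)) (hb : Ioi b ⊆ subsolLevels F) (hh : Continuous h)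
    (hσ : ∀ y v, suppFn F b y v ≤ h y * suppFn F b y v) (hψ : ContDiff ℝ 1 ψ) (hxy : x ≠ y)
    (hmin : IsLocalMin (fun z => wIntrinsicDist F b h x z - ψ z) y) :
    b ≤ F y (gradient ψ y) := by
  by_contra! hlt
  obtain ⟨ε, hε, hstrict⟩ :=
    exists_pos_forall_gradient_add_le hFc hψ hlt
  obtain ⟨δ, hδ, hminδ⟩ := nhds_basis_closedBall.eventually_iff.1 hmin
  obtain ⟨r, hr, hr'⟩ : ∃ r, 0 < r ∧ r ≤ min (min ε δ) (dist x y) :=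
    ⟨_, lt_min (lt_min hε hδ) (dist_pos.2 hxy), le_rfl⟩
  obtain ⟨⟨hrε, hrδ⟩, hrx⟩ : (r ≤ ε ∧ r ≤ δ) ∧ r ≤ dist x y := by simpa only [le_min_iff] using hr'
  have hgap : wIntrinsicDist F b h x y + ε * r ≤ wIntrinsicDist F b h x y :=
    le_wIntrinsicDist fun ξ hξ => wIntrinsicDist_add_mul_le_wIntrinsicLen hF hFc hb hh hσ hψ
      (fun z hz => hminδ (closedBall_subset_closedBall hrδ hz)) hε.le
      (fun z hz => hstrict z (closedBall_subset_closedBall hrε hz)) hr.le hrx hξ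
  exact (mul_pos hε hr).not_ge (by linarith)

theorem isVSupOn_wIntrinsicDist (hF : IsLocallyCoercive F)
    (hFc : Continuous (Function.uncurry F)) (hb : Ioi b ⊆ subsolLevels F) (hh : Continuous h)
    (hσ : ∀ y v, suppFn F b y v ≤ h y * suppFn F b y v) (x : Euc m) :
    IsVSupOn F b {x}ᶜ fun y => wIntrinsicDist F b h x y := by
  have hcont := (locallyLipschitz_wIntrinsicDist hF hFc hb hh hσ x).continuous
  refine ⟨hcont.lowerSemicontinuous.lowerSemicontinuousOn _, fun ψ hψ y hy hmin => ?_⟩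
  exact le_gradient_of_isLocalMin_wIntrinsicDist_sub hF hFc hb hh hσ hψ (Ne.symm hy)
    (hmin.isLocalMin (isOpen_compl_singleton.mem_nhds hy))

end Supersolution

theorem statement19_general {m : ℕ} {F : Euc m → Euc m → ℝ} {b : ℝ} {h : Euc m → ℝ}
    (hF : IsLocallyCoercive F) (hFc : Continuous (Function.uncurry F))
    (hb : Ioi b ⊆ subsolLevels F) (hh : Continuous h)
    (hσ : ∀ y v, suppFn F b y v ≤ h y * suppFn F b y v) (z0 : Euc m) :
    LocallyLipschitz (fun y => wIntrinsicDist F b h z0 y) ∧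
      IsVSupOn F b {z0}ᶜ fun y => wIntrinsicDist F b h z0 y :=
  ⟨locallyLipschitz_wIntrinsicDist hF hFc hb hh hσ z0,
    isVSupOn_wIntrinsicDist hF hFc hb hh hσ z0⟩

theorem statement19
    {m : ℕ} (F : Euc m → Euc m → ℝ)
    (hFc : Continuous fun z : Euc m × Euc m => F z.1 z.2)
    (hFconv : ∀ y : Euc m, ConvexOn ℝ univ (F y))
    (hFcoer : ∀ Kc : Set (Euc m), IsCompact Kc → ∀ c : ℝ, ∃ R : ℝ,
      ∀ q : Euc m, R < ‖q‖ → ∀ y ∈ Kc, c < F y q)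
    (hfin : (subsolLevels F).Nonempty) (hbdd : BddBelow (subsolLevels F))
    (b : ℝ) (hb : critVal F ≤ b)
    (h : Euc m → ℝ) (hhCont : Continuous h) (hh1 : ∀ y, 1 ≤ h y)
    (hh2 : ∀ y : Euc m, 1 < h y → F y 0 ≤ b) :
    ∀ z0 : Euc m,
      LocallyLipschitz (fun y => wIntrinsicDist F b h z0 y) ∧
      IsVSupOn F b ({z0}ᶜ) (fun y => wIntrinsicDist F b h z0 y) :=
  statement19_general hFcoer hFc (Ioi_subset_subsolLevels_of_critVal_le hfin hb) hhCont
    fun y v => suppFn_le_mul_suppFn hFcoer (hh1 y) (hh2 y) v
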